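/- Assume condition (R). Let Ψ_{γ,σ}(x;q) = x^{γ+1} λ_{γ,σ}(x;q) for real x>0, and let ξ_{γ,σ,n}(q) denote the n-th positive zero, in increasing order, of the derivative Ψ_{γ,σ}'(·;q). Then all zeros of Ψ_{γ,σ}'(·;q) are real, and the positive zeros of Ψ_{γ,σ}(·;q) and Ψ_{γ,σ}'(·;q) interlace: ξ_{γ,σ,1}(q) < ε_{γ,σ,1}(q) < ξ_{γ,σ,2}(q) < ε_{γ,σ,2}(q) < ⋯ . -/

import Mathlib

noncomputable def qPochInf (a q : ℝ) : ℝ := ∏' k : ℕ, (1 - a * q ^ k)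

noncomputable def qGamma (q x : ℝ) : ℝ :=
  qPochInf q q * (1 - q) ^ (1 - x) / qPochInf (q ^ x) q

noncomputable def qML (γ σ q : ℝ) (z : ℂ) : ℂ :=
  ∑' n : ℕ,
    (((-1) ^ n * σ ^ (2 * n) * q ^ (n * (n - 1)) / qGamma q (2 * n + γ + 1) : ℝ) : ℂ) * z ^ (2 * n)

noncomputable def qMLR (γ σ q : ℝ) (x : ℝ) : ℝ :=
  ∑' n : ℕ,
    ((-1) ^ n * σ ^ (2 * n) * q ^ (n * (n - 1)) / qGamma q (2 * n + γ + 1)) * x ^ (2 * n)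

def condR (q γ : ℝ) : Prop :=
  (γ = 0 ∨ γ = 1) ∨
    (γ ∈ Set.Ioo (0 : ℝ) 2 ∧ γ ≠ 1 ∧
      1 < q⁻¹ * (1 - q) * (1 - q ^ (γ + 1)) * (1 - q ^ (γ + 2)))

noncomputable def radiusStarlike (α : ℝ) (f : ℂ → ℂ) : ℝ :=
  sSup {r : ℝ | 0 < r ∧ ∀ z : ℂ, 0 < ‖z‖ → ‖z‖ < r →
    α < (z * deriv f z / f z).re}

noncomputable def radiusConvex (α : ℝ) (f : ℂ → ℂ) : ℝ :=
  sSup {r : ℝ | 0 < r ∧ ∀ z : ℂ, ‖z‖ < r →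
    α < (1 + z * deriv (deriv f) z / deriv f z).re}

noncomputable def fML (γ σ q : ℝ) (z : ℂ) : ℂ :=
  Complex.exp ((1 / ((γ : ℂ) + 1)) *
    Complex.log (z ^ ((γ : ℂ) + 1) * (qGamma q (γ + 1) : ℂ) * qML γ σ q z))

noncomputable def gML (γ σ q : ℝ) (z : ℂ) : ℂ :=
  z * (qGamma q (γ + 1) : ℂ) * qML γ σ q z

noncomputable def hML (γ σ q : ℝ) (z : ℂ) : ℂ :=
  z * (qGamma q (γ + 1) : ℂ) *
    ∑' n : ℕ,
      (((-1) ^ n * σ ^ (2 * n) * q ^ (n * (n - 1)) / qGamma q (2 * n + γ + 1) : ℝ) : ℂ) * z ^ n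

noncomputable def hMLR (γ σ q : ℝ) (x : ℝ) : ℝ :=
  x * qGamma q (γ + 1) *
    ∑' n : ℕ,
      ((-1) ^ n * σ ^ (2 * n) * q ^ (n * (n - 1)) / qGamma q (2 * n + γ + 1)) * x ^ n

section Helpers
open Filter Topology

def SepSeq (θ : ℝ) (t : ℕ → ℝ) : Prop := (∀ k, 0 ≤ t k) ∧ ∀ k, t (k + 1) ≤ θ * t k

noncomputable def cP (t : ℕ → ℝ) (w : ℂ) : ℂ := ∏' k, (1 + -((t k : ℂ) * w))

noncomputable def rP (t : ℕ → ℝ) (x : ℝ) : ℝ := ∏' k, (1 + -(t k * x))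

lemma SepSeq.le_pow {θ : ℝ} {t : ℕ → ℝ} (hθ : 0 ≤ θ) (h : SepSeq θ t) (k : ℕ) :
    t k ≤ t 0 * θ ^ k := by
  induction k with
  | zero => simp
  | succ k ih =>
    calc t (k+1) ≤ θ * t k := h.2 k
      _ ≤ θ * (t 0 * θ ^ k) := by gcongr
      _ = _ := by ring

lemma SepSeq.summable {θ : ℝ} {t : ℕ → ℝ} (hθ : 0 ≤ θ) (hθ1 : θ < 1) (h : SepSeq θ t) :
    Summable t :=
  Summable.of_nonneg_of_le h.1 (h.le_pow hθ)
    ((summable_geometric_of_lt_one hθ hθ1).mul_left _)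

lemma summ_norm {t : ℕ → ℝ} (ht : Summable t) (h0 : ∀ k, 0 ≤ t k) (w : ℂ) :
    Summable (fun k => ‖-((t k : ℂ) * w)‖) := by
  simp only [norm_neg, norm_mul, Complex.norm_real]
  exact ht.norm.mul_right _

lemma t0_le {t : ℕ → ℝ} (ht : Summable t) (h0 : ∀ k, 0 ≤ t k) : t 0 ≤ ‖cP t (-1)‖ := by
  have hs : Summable (fun s : Finset ℕ => ∏ i ∈ s, t i) :=
    summable_finsetProd_of_summable_nonneg h0 ht
  have h1 : cP t (-1) = ((∑' s : Finset ℕ, ∏ i ∈ s, t i : ℝ) : ℂ) := by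
    unfold cP
    rw [tprod_one_add]
    · rw [Complex.ofReal_tsum]
      congr 1; ext s; simp
    · apply summable_finsetProd_of_summable_norm
      exact summ_norm ht h0 _
  rw [h1, Complex.norm_real]
  have := hs.le_tsum {0} (fun s _ => Finset.prod_nonneg fun i _ => h0 i)
  simp only [Finset.prod_singleton] at this
  exact this.trans (le_abs_self _)

lemma sep_lim {θ : ℝ} (hθ : 0 ≤ θ) (hθ1 : θ < 1) (t : ℕ → ℕ → ℝ) (ht : ∀ N, SepSeq θ (t N))
    (F : ℂ → ℂ) (hF : ∀ w, Tendsto (fun N => cP (t N) w) atTop (𝓝 (F w))) :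
    ∃ s, SepSeq θ s ∧ ∀ w, F w = cP s w := by
  obtain ⟨B, hB⟩ := (hF (-1)).norm.bddAbove_range
  have hB' : ∀ N, t N 0 ≤ B := fun N =>
    (t0_le ((ht N).summable hθ hθ1) (ht N).1).trans (hB ⟨N, rfl⟩)
  have hB0 : 0 ≤ B := ((ht 0).1 0).trans (hB' 0)
  have hb : ∀ N k, t N k ≤ B * θ ^ k := fun N k =>
    ((ht N).le_pow hθ k).trans (mul_le_mul_of_nonneg_right (hB' N) (by positivity))
  have hK : IsCompact (Set.pi Set.univ (fun _ : ℕ => Set.Icc (0:ℝ) B)) :=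
    isCompact_univ_pi fun _ => isCompact_Icc
  obtain ⟨s, hs, φ, hφ, hlim⟩ := hK.tendsto_subseq (x := t) (by
    intro N k _
    exact ⟨(ht N).1 k, (hb N k).trans (mul_le_of_le_one_right hB0 (pow_le_one₀ hθ hθ1.le))⟩)
  rw [tendsto_pi_nhds] at hlim
  refine ⟨s, ⟨fun k => (hs k trivial).1, fun k => ?_⟩, fun w => ?_⟩
  · exact le_of_tendsto_of_tendsto' (hlim (k+1)) ((hlim k).const_mul θ) (fun n => (ht _).2 k)
  · refine tendsto_nhds_unique ((hF w).comp hφ.tendsto_atTop) ?_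
    unfold cP
    refine tendsto_tprod_one_add_of_dominated_convergence (bound := fun k => B * θ ^ k * ‖w‖)
      (((summable_geometric_of_lt_one hθ hθ1).mul_left _).mul_right _) ?_ ?_
    · intro k
      have := (Complex.continuous_ofReal.tendsto _).comp (hlim k)
      exact (this.mul_const w).neg
    · refine Eventually.of_forall fun n k => ?_
      rw [norm_neg, norm_mul, Complex.norm_real, Real.norm_of_nonneg ((ht _).1 k)]
      exact mul_le_mul_of_nonneg_right (hb _ k) (norm_nonneg _)

/-! analysis of the product -/

lemma cP_locUnif {t : ℕ → ℝ} (ht : Summable t) (h0 : ∀ k, 0 ≤ t k) (R : ℝ) :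
    MultipliableLocallyUniformlyOn (fun k w => 1 + -((t k : ℂ) * w)) (Metric.ball (0:ℂ) R) := by
  refine Summable.multipliableLocallyUniformlyOn_one_add (f := fun k w => -((t k : ℂ) * w))
    (u := fun k => t k * R) Metric.isOpen_ball (ht.mul_right R)
    (Eventually.of_forall fun k x hx => ?_) (fun k => by fun_prop)
  rw [norm_neg, norm_mul, Complex.norm_real, Real.norm_of_nonneg (h0 k)]
  have : ‖x‖ < R := by simpa using hx
  exact mul_le_mul_of_nonneg_left this.le (h0 k)

lemma cP_diff {t : ℕ → ℝ} (ht : Summable t) (h0 : ∀ k, 0 ≤ t k) : Differentiable ℂ (cP t) := by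
  intro w
  have hw : w ∈ Metric.ball (0:ℂ) (‖w‖ + 1) := by simp
  have : DifferentiableOn ℂ (cP t) (Metric.ball (0:ℂ) (‖w‖ + 1)) :=
    (cP_locUnif ht h0 (‖w‖+1)).hasProdLocallyUniformlyOn.differentiableOn
    (.of_forall fun _ ↦ by simpa [Finset.prod_fn] using
      DifferentiableOn.finsetProd (fun _ _ ↦ by fun_prop)) Metric.isOpen_ball
  exact this.differentiableAt (Metric.isOpen_ball.mem_nhds hw)

lemma cP_ne_zero {t : ℕ → ℝ} (ht : Summable t) (h0 : ∀ k, 0 ≤ t k) {w : ℂ}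
    (hw : ∀ k, 1 + -((t k : ℂ) * w) ≠ 0) : cP t w ≠ 0 :=
  tprod_one_add_ne_zero_of_summable hw (summ_norm ht h0 w)

lemma cP_eq_zero {t : ℕ → ℝ} {w : ℂ} {k : ℕ} (hw : 1 + -((t k : ℂ) * w) = 0) : cP t w = 0 :=
  tprod_of_exists_eq_zero ⟨k, hw⟩

lemma cP_summable {t : ℕ → ℝ} (ht : Summable t) (h0 : ∀ k, 0 ≤ t k) (w : ℂ) :
    Summable (fun k => t k / (1 + -((t k : ℂ) * w))) := by
  have h1 : Tendsto (fun k => ‖1 + -((t k : ℂ) * w)‖) atTop (𝓝 1) := by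
    have := (Complex.continuous_ofReal.tendsto _).comp ht.tendsto_atTop_zero
    have := ((this.mul_const w).neg.const_add 1).norm
    simpa using this
  refine (ht.mul_left 2).of_norm_bounded_eventually_nat ?_
  filter_upwards [h1.eventually (lt_mem_nhds (show (1/2:ℝ) < 1 by norm_num))] with k hk
  rw [norm_div, Complex.norm_real, Real.norm_of_nonneg (h0 k), div_le_iff₀ (by linarith)]
  nlinarith [h0 k]

lemma cP_logDeriv {t : ℕ → ℝ} (ht : Summable t) (h0 : ∀ k, 0 ≤ t k) {w : ℂ}
    (hw : ∀ k, 1 + -((t k : ℂ) * w) ≠ 0) :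
    deriv (cP t) w = - cP t w * ∑' k, t k / (1 + -((t k : ℂ) * w)) := by
  have hd : ∀ k, logDeriv (fun w => 1 + -((t k : ℂ) * w)) w = - (t k / (1 + -((t k : ℂ) * w))) := by
    intro k
    rw [logDeriv_apply]
    have : HasDerivAt (fun w => 1 + -((t k : ℂ) * w)) (-(t k * 1)) w :=
      ((hasDerivAt_id w).const_mul _).neg.const_add 1
    rw [this.deriv]; ring
  have hne := cP_ne_zero ht h0 hw
  have := logDeriv_tprod_eq_tsum (s := Metric.ball (0:ℂ) (‖w‖ + 1)) Metric.isOpen_ball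
    (x := w) (by simp) (f := fun k w => 1 + -((t k : ℂ) * w)) hw
    (fun k => by fun_prop) (by simp only [hd]; exact (cP_summable ht h0 w).neg)
    (cP_locUnif ht h0 _) hne
  simp only [hd, tsum_neg] at this
  change logDeriv (cP t) w = _ at this
  rw [logDeriv_apply, div_eq_iff hne] at this
  rw [this]; ring

lemma cP_ofReal {t : ℕ → ℝ} (ht : Summable t) (h0 : ∀ k, 0 ≤ t k) (x : ℝ) :
    cP t x = (rP t x : ℂ) := by
  unfold cP rP
  have hm : Multipliable (fun k => 1 + -(t k * x)) :=
    multipliable_one_add_of_summable (by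
      simpa only [norm_neg, norm_mul] using ht.norm.mul_right _)
  have := hm.map_tprod Complex.ofRealHom Complex.continuous_ofReal
  simp only [Complex.ofRealHom_eq_coe] at this
  rw [this]
  congr 1; ext k; push_cast; ring

lemma rP_ne_zero {t : ℕ → ℝ} (ht : Summable t) {x : ℝ}
    (hw : ∀ k, t k * x ≠ 1) : rP t x ≠ 0 :=
  tprod_one_add_ne_zero_of_summable (fun k h => hw k (by linarith)) (by
      simpa only [norm_neg, norm_mul] using ht.norm.mul_right _)

lemma rP_eq_zero {t : ℕ → ℝ} {x : ℝ} {k : ℕ} (hw : t k * x = 1) : rP t x = 0 :=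
  tprod_of_exists_eq_zero ⟨k, by linarith⟩

lemma rP_hasDerivAt {t : ℕ → ℝ} (ht : Summable t) (h0 : ∀ k, 0 ≤ t k) (x : ℝ) :
    HasDerivAt (rP t) (deriv (cP t) x).re x := by
  have := (cP_diff ht h0 (x:ℂ)).hasDerivAt.real_of_complex
  simpa [cP_ofReal ht h0] using this

lemma rP_summable {t : ℕ → ℝ} (ht : Summable t) (h0 : ∀ k, 0 ≤ t k) (x : ℝ) :
    Summable (fun k => t k / (1 + -(t k * x))) := by
  have := cP_summable ht h0 x
  rw [← Complex.summable_ofReal]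
  refine this.congr fun k => ?_
  push_cast; ring

lemma rP_logDeriv {t : ℕ → ℝ} (ht : Summable t) (h0 : ∀ k, 0 ≤ t k) {x : ℝ}
    (hw : ∀ k, t k * x ≠ 1) :
    deriv (rP t) x = - rP t x * ∑' k, t k / (1 + -(t k * x)) := by
  have hw' : ∀ k, 1 + -((t k : ℂ) * x) ≠ 0 := by
    intro k h
    apply hw k
    have : ((1 + -(t k * x) : ℝ) : ℂ) = 0 := by push_cast; exact h
    have := Complex.ofReal_eq_zero.1 this
    linarith
  rw [(rP_hasDerivAt ht h0 x).deriv, cP_logDeriv ht h0 hw', cP_ofReal ht h0]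
  have : (∑' k, (t k : ℂ) / (1 + -((t k : ℂ) * x))) = ((∑' k, t k / (1 + -(t k * x)) : ℝ) : ℂ) := by
    rw [Complex.ofReal_tsum]; congr 1; ext k; push_cast; ring
  rw [this, ← Complex.ofReal_neg, ← Complex.ofReal_mul, Complex.ofReal_re]

lemma rP_simple {t : ℕ → ℝ} (ht : Summable t) (h0 : ∀ k, 0 ≤ t k) {x : ℝ} {k : ℕ}
    (hk : t k * x = 1) (hj : ∀ j, j ≠ k → t j * x ≠ 1) : deriv (rP t) x ≠ 0 := by
  classical
  set s : ℕ → ℝ := Function.update t k 0 with hs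
  have hs0 : ∀ j, 0 ≤ s j := by
    intro j; by_cases h : j = k
    · subst h; simp [hs]
    · simp [hs, h, h0 j]
  have hss : Summable s := by
    refine Summable.of_nonneg_of_le hs0 (fun j => ?_) ht
    by_cases h : j = k
    · subst h; simp [hs, h0 j]
    · simp [hs, h]
  have hR : rP s x ≠ 0 := by
    apply rP_ne_zero hss
    intro j; by_cases h : j = k
    · subst h; simp [hs]
    · simpa [hs, h] using hj j h
  have hmul : ∀ t : ℕ → ℝ, Summable t → ∀ y : ℝ, Multipliable (fun k => 1 + -(t k * y)) :=
    fun t ht y => multipliable_one_add_of_summable (by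
      simpa only [norm_neg, norm_mul] using ht.norm.mul_right _)
  have hfac : rP t = fun y => (1 + -(t k * y)) * rP s y := by
    ext y
    unfold rP
    have h1 : (fun j => 1 + -(t j * y)) = fun j =>
        (if j = k then (1 + -(t k * y)) else 1) * (1 + -(s j * y)) := by
      ext j; by_cases h : j = k
      · subst h; simp [hs]
      · simp [hs, h]
    rw [h1]
    have h2 : Multipliable (fun j => if j = k then (1 + -(t k * y)) else 1) :=
      multipliable_of_ne_finset_one (s := {k}) (by intro b hb; simp at hb; simp [hb])
    rw [h2.tprod_mul (hmul s hss y), tprod_ite_eq]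
  have hd := (((hasDerivAt_id x).const_mul (t k)).neg.const_add 1).mul (rP_hasDerivAt hss hs0 x)
  have : deriv (rP t) x = -(t k * 1) * rP s x := by
    rw [hfac]
    refine (hd.congr_deriv ?_).deriv
    simp [hk]
  rw [this]
  have : t k ≠ 0 := by rintro h; simp [h] at hk
  simp [this, hR]
open Polynomial in
lemma poly_factor (P : Polynomial ℝ) (N : ℕ) (hdeg : P.natDegree ≤ N) (r : ℕ → ℝ)
    (hpos : ∀ k < N, 0 < r k) (hinj : ∀ i j, i < j → j < N → r i < r j)
    (hz : ∀ k < N, P.eval (r k) = 0) :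
    P = C (P.eval 0) * ∏ k ∈ Finset.range N, (1 - C (r k)⁻¹ * X) := by
  classical
  have hInj : Set.InjOn r (Finset.range N) := by
    intro i hi j hj hij
    simp only [Finset.coe_range, Set.mem_Iio] at hi hj
    rcases lt_trichotomy i j with h | h | h
    · exact absurd hij (hinj i j h hj).ne
    · exact h
    · exact absurd hij (hinj j i h hi).ne'
  have h0 : (0:ℝ) ∉ (Finset.range N).image r := by
    simp only [Finset.mem_image, Finset.mem_range, not_exists, not_and]
    intro k hk h
    exact (hpos k hk).ne' h
  apply eq_of_natDegree_lt_card_of_eval_eq' _ _ (insert 0 ((Finset.range N).image r))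
  · intro x hx
    rw [Finset.mem_insert] at hx
    rcases hx with rfl | hx
    · simp [eval_prod]
    · simp only [Finset.mem_image, Finset.mem_range] at hx
      obtain ⟨k, hk, rfl⟩ := hx
      rw [hz k hk, eval_mul, eval_prod, Finset.prod_eq_zero (Finset.mem_range.2 hk), mul_zero]
      simp [(hpos k hk).ne']
  · rw [Finset.card_insert_of_notMem h0, Finset.card_image_of_injOn hInj, Finset.card_range]
    have h2 : (C (P.eval 0) * ∏ k ∈ Finset.range N, (1 - C (r k)⁻¹ * X)).natDegree ≤ N := by
      refine (natDegree_C_mul_le _ _).trans ((natDegree_prod_le _ _).trans ?_)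
      calc _ ≤ ∑ k ∈ Finset.range N, 1 := Finset.sum_le_sum fun k _ => by
            refine (natDegree_sub_le _ _).trans ?_
            simp only [natDegree_one, zero_le, sup_of_le_right]
            exact (natDegree_C_mul_le _ _).trans natDegree_X_le
        _ = N := by simp
    omega

def Good (θ : ℝ) (N : ℕ) (P : Polynomial ℝ) (r : ℕ → ℝ) : Prop :=
  P.natDegree ≤ N ∧ 0 < P.eval 0 ∧ (∀ k < N, 0 < r k) ∧ (∀ k, k + 1 < N → r k ≤ θ * r (k + 1)) ∧
    ∀ k < N, P.eval (r k) = 0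

lemma Good.lt_of_lt {θ : ℝ} {N : ℕ} {P : Polynomial ℝ} {r : ℕ → ℝ} (hθ1 : θ < 1)
    (h : Good θ N P r) : ∀ i j, i < j → j < N → r i ≤ θ * r j := by
  intro i j hij hj
  induction j with
  | zero => omega
  | succ j ih =>
    rcases Nat.lt_succ_iff_lt_or_eq.1 hij with h1 | h1
    · have h2 := ih h1 (by omega)
      have h3 := h.2.2.2.1 j hj
      have h4 := h.2.2.1 j (by omega)
      nlinarith
    · subst h1; exact h.2.2.2.1 i hj

lemma Good.mono {θ : ℝ} {N : ℕ} {P : Polynomial ℝ} {r : ℕ → ℝ} (hθ1 : θ < 1)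
    (h : Good θ N P r) : ∀ i j, i < j → j < N → r i < r j := by
  intro i j hij hj
  have h1 := h.lt_of_lt hθ1 i j hij hj
  have h4 := h.2.2.1 j hj
  nlinarith

lemma Good.factor {θ : ℝ} {N : ℕ} {P : Polynomial ℝ} {r : ℕ → ℝ} (hθ1 : θ < 1)
    (h : Good θ N P r) : P = Polynomial.C (P.eval 0) *
      ∏ k ∈ Finset.range N, (1 - Polynomial.C (r k)⁻¹ * Polynomial.X) :=
  poly_factor P N h.1 r h.2.2.1 (h.mono hθ1) h.2.2.2.2

lemma Good.exists_sep {θ : ℝ} {N : ℕ} {P : Polynomial ℝ} {r : ℕ → ℝ} (hθ : 0 < θ) (hθ1 : θ < 1)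
    (h : Good θ N P r) : ∃ t, SepSeq θ t ∧ ∀ w : ℂ,
      Polynomial.aeval w P = ((P.eval 0 : ℝ) : ℂ) * cP t w := by
  refine ⟨fun k => if k < N then (r k)⁻¹ else 0, ⟨fun k => ?_, fun k => ?_⟩, fun w => ?_⟩
  · dsimp only; split_ifs with hk
    · exact (inv_pos.2 (h.2.2.1 k hk)).le
    · exact le_rfl
  · dsimp only
    split_ifs with h1 h2 h2
    · have a := h.2.2.1 k h2
      have b := h.2.2.1 (k+1) h1
      rw [← div_eq_mul_inv, inv_eq_one_div, div_le_div_iff₀ b a, one_mul]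
      exact h.2.2.2.1 k h1
    · omega
    · have a := h.2.2.1 k h2
      positivity
    · simp
  · have h1 := h.factor hθ1
    rw [h1]
    simp only [map_mul, map_prod, Polynomial.aeval_C, map_sub, map_one, Polynomial.aeval_X]
    rw [← h1]
    congr 1
    unfold cP
    rw [tprod_eq_prod (s := Finset.range N)]
    · refine Finset.prod_congr rfl fun k hk => ?_
      rw [Finset.mem_range] at hk
      simp [hk]; ring
    · intro k hk
      simp at hk
      simp [hk]

lemma Good.sign {θ : ℝ} {N : ℕ} {P : Polynomial ℝ} {r : ℕ → ℝ} (hθ1 : θ < 1)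
    (h : Good θ N P r) {k : ℕ} (hk : k ≤ N) {x : ℝ} (hlo : ∀ j < k, r j ≤ x)
    (hhi : ∀ j, k ≤ j → j < N → x ≤ r j) : 0 ≤ (-1) ^ k * P.eval x := by
  have h1 : P.eval x = P.eval 0 * ∏ k ∈ Finset.range N, (1 - (r k)⁻¹ * x) := by
    conv_lhs => rw [h.factor hθ1]
    simp [Polynomial.eval_prod]
  obtain ⟨m, rfl⟩ := Nat.exists_eq_add_of_le hk
  rw [h1, Finset.prod_range_add, mul_left_comm]
  refine mul_nonneg h.2.1.le ?_
  rw [← mul_assoc]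
  refine mul_nonneg ?_ (Finset.prod_nonneg fun j hj => ?_)
  · have : ((-1:ℝ)) ^ k = ∏ j ∈ Finset.range k, (-1) := by simp
    rw [this, ← Finset.prod_mul_distrib]
    refine Finset.prod_nonneg fun j hj => ?_
    rw [Finset.mem_range] at hj
    have a := h.2.2.1 j (by omega)
    have b := hlo j hj
    have : 1 ≤ (r j)⁻¹ * x := by rw [inv_mul_eq_div, le_div_iff₀ a]; linarith
    linarith
  · rw [Finset.mem_range] at hj
    have a := h.2.2.1 (k+j) (by omega)
    have b := hhi (k+j) (by omega) (by omega)
    have : (r (k+j))⁻¹ * x ≤ 1 := by rw [inv_mul_eq_div, div_le_iff₀ a]; linarith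
    linarith

lemma poly_ivt (P : Polynomial ℝ) (s : ℝ) (hs : s ≠ 0) {a b : ℝ} (hab : a ≤ b)
    (ha : 0 ≤ s * P.eval a) (hb : s * P.eval b ≤ 0) : ∃ x, a ≤ x ∧ x ≤ b ∧ P.eval x = 0 := by
  have := intermediate_value_Icc' (f := fun x => s * P.eval x) hab (by fun_prop)
  obtain ⟨x, hx, h⟩ := this ⟨hb, ha⟩
  exact ⟨x, hx.1, hx.2, by simpa [hs] using h⟩

noncomputable def opL (c p : ℝ) (P : Polynomial ℝ) : Polynomial ℝ :=
  P - Polynomial.C c * P.comp (Polynomial.C p * Polynomial.X)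

lemma opL_eval (c p : ℝ) (P : Polynomial ℝ) (x : ℝ) :
    (opL c p P).eval x = P.eval x - c * P.eval (p * x) := by
  simp [opL]

lemma opL_coeff (c p : ℝ) (P : Polynomial ℝ) (n : ℕ) :
    (opL c p P).coeff n = P.coeff n * (1 - c * p ^ n) := by
  simp [opL, Polynomial.comp_C_mul_X_coeff]; ring

lemma opL_good {c p : ℝ} (hc : 0 ≤ c) (hc1 : c < 1) (hp : 0 < p) (hp1 : p < 1) {N : ℕ}
    {P : Polynomial ℝ} {r : ℕ → ℝ} (h : Good p N P r) : ∃ r', Good p N (opL c p P) r' := by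
  have h00 : 0 < (opL c p P).eval 0 := by
    rw [opL_eval, mul_zero]; nlinarith [h.2.1]
  have hmono := h.mono hp1
  have hmono' : ∀ i j, i ≤ j → j < N → r i ≤ r j := by
    intro i j hij hj
    rcases hij.lt_or_eq with h1 | rfl
    · exact (hmono i j h1 hj).le
    · exact le_rfl
  have key : ∀ k, ∃ x, k < N → (0 < x ∧ x ≤ r k ∧ (opL c p P).eval x = 0 ∧
      ∀ j, j + 1 = k → r j ≤ p * x) := by
    intro k
    by_cases hk : k < N
    swap
    · exact ⟨0, fun h => absurd h hk⟩
    have hrk := h.2.2.1 k hk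
    have hend : (-1) ^ k * (opL c p P).eval (r k) ≤ 0 := by
      rw [opL_eval, h.2.2.2.2 k hk]
      have := h.sign hp1 hk.le (x := p * r k) (fun j hj => h.lt_of_lt hp1 j k hj hk)
        (fun j hj hjN => by
          have := hmono' k j hj hjN
          nlinarith)
      nlinarith
    rcases k with _ | k
    · obtain ⟨x, hx0, hx1, hx⟩ := poly_ivt (opL c p P) ((-1)^0) (by simp) hrk.le
        (by simpa using h00.le) hend
      refine ⟨x, fun _ => ⟨lt_of_le_of_ne hx0 ?_, hx1, hx, by simp⟩⟩
      rintro rfl; exact h00.ne' hx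
    · have hrk' := h.2.2.1 k (by omega)
      have hs := h.2.2.2.1 k hk
      have e1 : p * (r k / p) = r k := by field_simp
      have e2 : r k ≤ r k / p := by rw [le_div_iff₀ hp]; nlinarith
      have e3 : r k / p ≤ r (k+1) := by rw [div_le_iff₀ hp]; linarith
      obtain ⟨x, hx0, hx1, hx⟩ := poly_ivt (opL c p P) ((-1)^(k+1)) (by simp)
        (a := r k / p) (b := r (k+1)) e3
        (by
          rw [opL_eval, e1, h.2.2.2.2 k (by omega), mul_zero, sub_zero]
          exact h.sign hp1 hk.le (fun j hj => (hmono' j k (by omega) (by omega)).trans e2)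
            (fun j hj hjN => e3.trans (hmono' _ _ hj hjN))) hend
      refine ⟨x, fun _ => ⟨by linarith, hx1, hx, fun j hj => ?_⟩⟩
      obtain rfl : j = k := by omega
      rw [div_le_iff₀ hp] at hx0; linarith
  choose r' hr' using key
  refine ⟨r', ?_, h00, fun k hk => (hr' k hk).1, fun k hk => ?_, fun k hk => (hr' k hk).2.2.1⟩
  · rw [Polynomial.natDegree_le_iff_coeff_eq_zero]
    intro n hn
    rw [opL_coeff, Polynomial.coeff_eq_zero_of_natDegree_lt (h.1.trans_lt hn), zero_mul]
  · exact ((hr' k (by omega)).2.1).trans ((hr' (k+1) hk).2.2.2 k rfl)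

noncomputable def serT (ρ : ℕ → ℝ) (w : ℂ) (n : ℕ) : ℂ := ((∏ i ∈ Finset.range n, (-ρ i) : ℝ) : ℂ) * w ^ n

lemma rho_tendsto {ρ : ℕ → ℝ} {p : ℝ} (hp : 0 ≤ p) (hp1 : p < 1) (hρ : ∀ n, 0 < ρ n)
    (hs : ∀ n, ρ (n + 1) ≤ p * ρ n) : Tendsto ρ atTop (𝓝 0) :=
  (SepSeq.summable hp hp1 ⟨fun n => (hρ n).le, hs⟩).tendsto_atTop_zero

lemma serT_summable {ρ : ℕ → ℝ} {p : ℝ} (hp : 0 ≤ p) (hp1 : p < 1) (hρ : ∀ n, 0 < ρ n)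
    (hs : ∀ n, ρ (n + 1) ≤ p * ρ n) (w : ℂ) : Summable (fun n => ‖serT ρ w n‖) := by
  have h1 : Tendsto (fun n => ρ n * ‖w‖) atTop (𝓝 0) := by
    simpa using (rho_tendsto hp hp1 hρ hs).mul_const ‖w‖
  refine summable_of_ratio_norm_eventually_le (r := 1/2) (by norm_num) ?_
  filter_upwards [h1.eventually (gt_mem_nhds (show (0:ℝ) < 1/2 by norm_num))] with n hn
  have : serT ρ w (n+1) = serT ρ w n * (-(ρ n : ℂ) * w) := by
    unfold serT; rw [Finset.prod_range_succ]; push_cast; ring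
  rw [this]
  simp only [norm_mul, norm_neg, Complex.norm_real, norm_norm, Real.norm_of_nonneg (hρ n).le]
  nlinarith [norm_nonneg (serT ρ w n)]

/-! Hutchinson -/

lemma alt_dec (m : ℕ) : ∀ b : ℕ → ℝ, (∀ i, 0 ≤ b i) → (∀ i, b (i + 1) ≤ b i) →
    0 ≤ ∑ i ∈ Finset.range m, (-1) ^ i * b i ∧ ∑ i ∈ Finset.range m, (-1) ^ i * b i ≤ b 0 := by
  induction m with
  | zero => intro b hb _; simpa using hb 0
  | succ m ih =>
    intro b hb hd
    obtain ⟨h1, h2⟩ := ih (fun i => b (i+1)) (fun i => hb _) (fun i => hd _)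
    have : ∑ i ∈ Finset.range (m+1), (-1) ^ i * b i =
        b 0 - ∑ i ∈ Finset.range m, (-1) ^ i * b (i+1) := by
      rw [Finset.sum_range_succ', sub_eq_neg_add, ← Finset.sum_neg_distrib]
      congr 1
      · refine Finset.sum_congr rfl fun i _ => ?_
        ring
      · simp
    rw [this]
    have := hd 0
    simp only [zero_add] at h2 this
    constructor <;> linarith

lemma alt_inc (T : ℕ → ℝ) (hT : ∀ i, 0 ≤ T i) (m : ℕ) (hi : ∀ i < m, T i ≤ T (i + 1)) :
    0 ≤ (-1) ^ m * ∑ i ∈ Finset.range (m + 1), (-1) ^ i * T i ∧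
      (-1) ^ m * ∑ i ∈ Finset.range (m + 1), (-1) ^ i * T i ≤ T m := by
  induction m with
  | zero => simpa using hT 0
  | succ m ih =>
    obtain ⟨h1, h2⟩ := ih (fun i h => hi i (by omega))
    have h3 := hi m (by omega)
    have hsq : ((-1:ℝ)) ^ (m+1) * (-1) ^ (m+1) = 1 := by rw [← mul_pow]; simp
    rw [Finset.sum_range_succ, mul_add, ← mul_assoc _ _ (T (m+1)), hsq, pow_succ]
    constructor <;> linarith

lemma alt_mid (T : ℕ → ℝ) (hT : ∀ i, 0 ≤ T i) (k m : ℕ) (hi : ∀ i, i + 1 < k → T i ≤ T (i + 1))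
    (hd : ∀ i, k < i → T (i + 1) ≤ T i) (h0 : T (k + 1) ≤ T k)
    (hm : ∀ j, j + 1 = k → T j + T (k + 1) ≤ T k) :
    0 ≤ (-1) ^ k * ∑ i ∈ Finset.range (k + m + 1), (-1) ^ i * T i := by
  have hsq : ((-1:ℝ)) ^ k * (-1) ^ k = 1 := by rw [← mul_pow]; simp
  have hsplit : (-1) ^ k * ∑ i ∈ Finset.range (k + m + 1), (-1) ^ i * T i =
      (-1)^k * ∑ i ∈ Finset.range k, (-1)^i * T i + T k
        - ∑ i ∈ Finset.range m, (-1)^i * T (k + 1 + i) := by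
    rw [show k + m + 1 = k + 1 + m by ring, Finset.sum_range_add, Finset.sum_range_succ,
      mul_add, mul_add, ← mul_assoc _ _ (T k), hsq, one_mul, sub_eq_add_neg,
      ← Finset.sum_neg_distrib, Finset.mul_sum (s := Finset.range m)]
    congr 1
    refine Finset.sum_congr rfl fun i _ => ?_
    rw [pow_add, pow_succ]
    linear_combination (-(-1)^i * T (k+1+i)) * hsq
  rw [hsplit]
  have h1 := (alt_dec m (fun i => T (k+1+i)) (fun _ => hT _) (fun i => hd (k+1+i) (by omega))).2
  simp only [add_zero] at h1
  rcases k with _ | k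
  · simp only [Finset.range_zero, Finset.sum_empty, mul_zero] at *
    linarith
  · have h2 := (alt_inc T hT k (fun i hi' => hi i (by omega))).2
    have h3 := hm k rfl
    rw [pow_succ]
    linarith

lemma hutch {ρ : ℕ → ℝ} {p : ℝ} (hp : 0 < p) (hp4 : p < 1/4) (hρ : ∀ n, 0 < ρ n)
    (hs : ∀ n, ρ (n + 1) ≤ p * ρ n) : ∃ θ t, 0 < θ ∧ θ < 1 ∧ SepSeq θ t ∧
      ∀ w, ∑' n, serT ρ w n = cP t w := by
  obtain ⟨η, hη0, hη1, hη⟩ : ∃ η : ℝ, 0 < η ∧ η < 1/4 ∧ p ≤ (1/2-η)*(1/2+η) :=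
    ⟨1/4 - p, by linarith, by linarith, by nlinarith⟩
  set y₁ : ℝ := 1/2 - η with hy1
  set y₂ : ℝ := 1/2 + η with hy2
  have hρanti : Antitone ρ := antitone_nat_of_succ_le fun n => by nlinarith [hs n, hρ n]
  -- partial sums
  set Q : ℕ → Polynomial ℝ := fun N => ∑ n ∈ Finset.range (N + 1),
    Polynomial.C (∏ i ∈ Finset.range n, (-ρ i)) * Polynomial.X ^ n with hQ
  have hsign : ∀ N k, k ≤ N → ∀ x, 0 < x → p ≤ (ρ k * x) * (1 - ρ k * x) → p ≤ ρ k * x →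
      ρ k * x ≤ 1 → 0 ≤ (-1) ^ k * (Q N).eval x := by
    intro N k hk x hx hxy hy0 hy3
    set T : ℕ → ℝ := fun n => (∏ i ∈ Finset.range n, ρ i) * x ^ n with hT
    have hTpos : ∀ n, 0 < T n := fun n => mul_pos (Finset.prod_pos fun i _ => hρ i) (by positivity)
    have hTs : ∀ n, T (n+1) = T n * (ρ n * x) := by
      intro n; simp only [hT, Finset.prod_range_succ]; ring
    obtain ⟨m, rfl⟩ := Nat.exists_eq_add_of_le hk
    have hev : (Q (k+m)).eval x = ∑ i ∈ Finset.range (k+m+1), (-1)^i * T i := by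
      simp only [hQ, Polynomial.eval_finsetSum, hT]
      refine Finset.sum_congr rfl fun i _ => ?_
      have : ∏ j ∈ Finset.range i, (-ρ j) = (-1)^i * ∏ j ∈ Finset.range i, ρ j := by
        rw [Finset.prod_neg]; simp
      rw [Polynomial.eval_mul, Polynomial.eval_C, Polynomial.eval_pow, Polynomial.eval_X, this,
        mul_assoc]
    rw [hev]
    apply alt_mid T (fun i => (hTpos i).le)
    · intro i hi
      obtain ⟨j, rfl⟩ : ∃ j, k = j + 1 := ⟨k - 1, by omega⟩
      rw [hTs]
      have h1 := hρanti (show i ≤ j by omega)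
      have h2 : 1 ≤ ρ j * x := by
        have := mul_le_mul_of_nonneg_right (hs j) hx.le
        by_contra hcon
        nlinarith
      nlinarith [hTpos i, mul_le_mul_of_nonneg_right h1 hx.le]
    · intro i hi
      rw [hTs]
      have h1 := mul_le_mul_of_nonneg_right (hρanti hi.le) hx.le
      nlinarith [hTpos i]
    · rw [hTs]; nlinarith [hTpos k]
    · rintro j rfl
      rw [hTs (j+1), hTs j]
      have h1 := mul_le_mul_of_nonneg_right (hs j) hx.le
      have h2 : 1 ≤ ρ j * x * (1 - ρ (j+1) * x) := by
        by_contra hcon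
        push Not at hcon
        have := mul_le_mul_of_nonneg_right h1 (show 0 ≤ 1 - ρ (j+1) * x by linarith)
        nlinarith
      nlinarith [hTpos j]
  have hθ : 0 < y₁ / y₂ := by apply div_pos <;> linarith
  have hθ1 : y₁ / y₂ < 1 := by rw [div_lt_one (by linarith)]; linarith
  have hy1pos : 0 < y₁ := by linarith
  have hy2pos : 0 < y₂ := by linarith
  have hpy : p ≤ y₁ := by nlinarith
  have hGood : ∀ N, ∃ r, Good (y₁ / y₂) N (Q N) r := by
    intro N
    have key : ∀ k, ∃ x, k < N → (y₂ / ρ k ≤ x ∧ x ≤ y₁ / ρ (k+1) ∧ (Q N).eval x = 0) := by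
      intro k
      by_cases hk : k < N
      swap
      · exact ⟨0, fun h => absurd h hk⟩
      have e1 : ρ k * (y₂ / ρ k) = y₂ := by have := hρ k; field_simp
      have e2 : ρ (k+1) * (y₁ / ρ (k+1)) = y₁ := by have := hρ (k+1); field_simp
      have hle : y₂ / ρ k ≤ y₁ / ρ (k+1) := by
        rw [div_le_div_iff₀ (hρ k) (hρ _)]
        have : y₂ * ρ (k+1) ≤ y₂ * (p * ρ k) := by gcongr; exact hs k
        have h3 : y₂ * p ≤ y₁ := by nlinarith
        nlinarith [hρ k]
      have ha := hsign N k hk.le (y₂ / ρ k) (div_pos hy2pos (hρ k))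
        (by rw [e1, show 1 - y₂ = y₁ by linarith]; linarith)
        (by rw [e1]; linarith) (by rw [e1]; linarith)
      have hb := hsign N (k+1) hk (y₁ / ρ (k+1)) (div_pos hy1pos (hρ _))
        (by rw [e2, show 1 - y₁ = y₂ by linarith]; linarith)
        (by rw [e2]; linarith) (by rw [e2]; linarith)
      obtain ⟨x, hx0, hx1, hx⟩ := poly_ivt (Q N) ((-1)^k) (by simp) hle ha (by
        rw [pow_succ] at hb; linarith)
      exact ⟨x, fun _ => ⟨hx0, hx1, hx⟩⟩
    choose r hr using key
    refine ⟨r, ?_, ?_, fun k hk => ?_, fun k hk => ?_, fun k hk => (hr k hk).2.2⟩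
    · apply Polynomial.natDegree_sum_le_of_forall_le
      intro i hi
      rw [Finset.mem_range] at hi
      exact (Polynomial.natDegree_C_mul_X_pow_le _ _).trans (by omega)
    · simp [hQ, Polynomial.eval_finsetSum, Finset.sum_range_succ']
    · exact lt_of_lt_of_le (div_pos hy2pos (hρ k)) (hr k hk).1
    · have h1 := (hr k (by omega)).2.1
      have h2 := (hr (k+1) hk).1
      calc r k ≤ y₁ / ρ (k+1) := h1
        _ = y₁ / y₂ * (y₂ / ρ (k+1)) := by field_simp
        _ ≤ _ := by gcongr
  have hQ0 : ∀ N, (Q N).eval 0 = 1 := by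
    intro N; simp [hQ, Polynomial.eval_finsetSum, Finset.sum_range_succ']
  have hSep : ∀ N, ∃ t, SepSeq (y₁ / y₂) t ∧ ∀ w : ℂ, Polynomial.aeval w (Q N) = cP t w := by
    intro N
    obtain ⟨r, hr⟩ := hGood N
    obtain ⟨t, ht, h⟩ := hr.exists_sep hθ hθ1
    exact ⟨t, ht, fun w => by rw [h w, hQ0]; simp⟩
  choose t ht htw using hSep
  obtain ⟨s, hs1, hs2⟩ := sep_lim hθ.le hθ1 t ht (fun w => ∑' n, serT ρ w n) (by
    intro w
    have := (serT_summable hp.le (by linarith) hρ hs w).of_norm.hasSum.tendsto_sum_nat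
    refine ((tendsto_add_atTop_iff_nat 1).2 this).congr fun N => ?_
    rw [← htw N w]
    simp [hQ, serT])
  exact ⟨_, s, hθ, hθ1, hs1, hs2⟩

noncomputable def polE (p : ℝ) (N : ℕ) : Polynomial ℝ :=
  ∏ k ∈ Finset.range N, (1 - Polynomial.C (p ^ k) * Polynomial.X)

noncomputable def polB (p c : ℝ) (N : ℕ) : ℕ → Polynomial ℝ
  | 0 => polE p N
  | M + 1 => opL (c * p ^ M) p (polB p c N M)

lemma polE_good {p : ℝ} (hp : 0 < p) (N : ℕ) :
    Good p N (polE p N) (fun k => (p ^ k)⁻¹) := by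
  refine ⟨?_, ?_, fun k _ => by positivity, fun k _ => ?_, fun k hk => ?_⟩
  · refine (Polynomial.natDegree_prod_le _ _).trans ?_
    calc _ ≤ ∑ k ∈ Finset.range N, 1 := Finset.sum_le_sum fun k _ => by
            refine (Polynomial.natDegree_sub_le _ _).trans ?_
            simp only [Polynomial.natDegree_one, zero_le, sup_of_le_right]
            exact (Polynomial.natDegree_C_mul_le _ _).trans Polynomial.natDegree_X_le
        _ = N := by simp
  · simp [polE, Polynomial.eval_prod]
  · apply le_of_eq; simp only [pow_succ]; field_simp
  · rw [polE, Polynomial.eval_prod]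
    apply Finset.prod_eq_zero (Finset.mem_range.2 hk)
    have : p ^ k ≠ 0 := by positivity
    simp [this]

lemma polE_coeff_succ {p : ℝ} (N n : ℕ) :
    (polE p N).coeff (n + 1) * (1 - p ^ (n + 1)) = (p ^ N - p ^ n) * (polE p N).coeff n := by
  have hfe : polE p N * (1 - Polynomial.C (p ^ N) * Polynomial.X) =
      (1 - Polynomial.X) * (polE p N).comp (Polynomial.C p * Polynomial.X) := by
    have h1 := Finset.prod_range_succ
      (fun k => (1 - Polynomial.C (p ^ k) * Polynomial.X : Polynomial ℝ)) N
    have h2 := Finset.prod_range_succ'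
      (fun k => (1 - Polynomial.C (p ^ k) * Polynomial.X : Polynomial ℝ)) N
    rw [polE, ← h1, h2, Polynomial.prod_comp]
    simp only [pow_zero, map_one, one_mul]
    rw [mul_comm]
    congr 1
    refine Finset.prod_congr rfl fun k _ => ?_
    simp [pow_succ]; ring
  have h := congrArg (fun P => P.coeff (n+1)) hfe
  have e1 : polE p N * (1 - Polynomial.C (p ^ N) * Polynomial.X) =
    polE p N - Polynomial.C (p ^ N) * (polE p N * Polynomial.X) := by ring
  have e2 : ∀ Z : Polynomial ℝ, (1 - Polynomial.X) * Z = Z - Z * Polynomial.X := by intro Z; ring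
  simp only [e1, e2, Polynomial.coeff_sub, Polynomial.coeff_C_mul, Polynomial.coeff_mul_X,
    Polynomial.comp_C_mul_X_coeff] at h
  linear_combination h

lemma polE_coeff_zero {p : ℝ} (N : ℕ) : (polE p N).coeff 0 = 1 := by
  rw [Polynomial.coeff_zero_eq_eval_zero]; simp [polE, Polynomial.eval_prod]

lemma polB_good {p c : ℝ} (hp : 0 < p) (hp1 : p < 1) (hc : 0 < c) (hc1 : c < 1) (N M : ℕ) :
    ∃ r, Good p N (polB p c N M) r := by
  induction M with
  | zero => exact ⟨_, polE_good hp N⟩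
  | succ M ih =>
    obtain ⟨r, hr⟩ := ih
    have : p ^ M ≤ 1 := pow_le_one₀ hp.le hp1.le
    exact opL_good (by positivity) (by nlinarith) hp hp1 hr

lemma polB_coeff {p c : ℝ} (N M n : ℕ) :
    (polB p c N M).coeff n = (polE p N).coeff n * ∏ j ∈ Finset.range M, (1 - c * p ^ j * p ^ n) := by
  induction M with
  | zero => simp [polB]
  | succ M ih => rw [polB, opL_coeff, ih, Finset.prod_range_succ]; ring

lemma polB_norm {p c : ℝ} (hp : 0 < p) (hp1 : p < 1) (hc : 0 < c) (hc1 : c < 1) (N n : ℕ) :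
    (polB p c N N).coeff n = (polB p c N N).coeff 0 * ∏ i ∈ Finset.range n,
      ((p ^ N - p ^ i) * (1 - c * p ^ (N + i)) / ((1 - p ^ (i + 1)) * (1 - c * p ^ i))) := by
  induction n with
  | zero => simp
  | succ n ih =>
    rw [Finset.prod_range_succ, ← mul_assoc, ← ih, polB_coeff, polB_coeff]
    have h1 : 0 < 1 - p ^ (n+1) := by
      have := pow_lt_one₀ hp.le hp1 (Nat.succ_ne_zero n); simpa using this
    have h2 : 0 < 1 - c * p ^ n := by
      have : p ^ n ≤ 1 := pow_le_one₀ hp.le hp1.le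
      nlinarith
    have h3 : (∏ j ∈ Finset.range N, (1 - c * p ^ j * p ^ (n+1))) * (1 - c * p ^ n) =
        (∏ j ∈ Finset.range N, (1 - c * p ^ j * p ^ n)) * (1 - c * p ^ (N + n)) := by
      have a := Finset.prod_range_succ (fun j => (1 - c * p ^ j * p ^ n)) N
      have b := Finset.prod_range_succ' (fun j => (1 - c * p ^ j * p ^ n)) N
      have e : ∏ j ∈ Finset.range N, (1 - c * p ^ j * p ^ (n+1)) =
        ∏ j ∈ Finset.range N, (1 - c * p ^ (j+1) * p ^ n) :=
        Finset.prod_congr rfl fun j _ => by ring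
      rw [e]
      rw [b] at a
      simp only [pow_zero, mul_one] at a
      rw [a, pow_add]; ring
    have h4 := polE_coeff_succ (p := p) N n
    rw [← mul_div_assoc, eq_div_iff (by positivity)]
    linear_combination ((∏ j ∈ Finset.range N, (1 - c * p ^ j * p ^ (n+1))) * (1 - c * p ^ n)) * h4
      + (p ^ N - p ^ n) * (polE p N).coeff n * h3

lemma bessel {ρ : ℕ → ℝ} {p c : ℝ} (hp : 0 < p) (hp1 : p < 1) (hc : 0 < c) (hc1 : c < 1)
    (hρ : ∀ n, ρ n = p ^ n / ((1 - p ^ (n + 1)) * (1 - c * p ^ n))) :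
    ∃ θ t, 0 < θ ∧ θ < 1 ∧ SepSeq θ t ∧ ∀ w, ∑' n, serT ρ w n = cP t w := by
  have h1 : ∀ n, 0 < 1 - p ^ (n+1) := fun n => by
    have := pow_lt_one₀ hp.le hp1 (Nat.succ_ne_zero n); simpa using this
  have h2 : ∀ n, 0 < 1 - c * p ^ n := fun n => by
    have : p ^ n ≤ 1 := pow_le_one₀ hp.le hp1.le
    nlinarith
  have hρpos : ∀ n, 0 < ρ n := fun n => by
    rw [hρ]; exact div_pos (by positivity) (mul_pos (h1 n) (h2 n))
  have hs : ∀ n, ρ (n+1) ≤ p * ρ n := by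
    intro n
    rw [hρ, hρ, ← mul_div_assoc, ← pow_succ']
    have a : p ^ (n+1+1) ≤ p ^ (n+1) := pow_le_pow_of_le_one hp.le hp1.le (by omega)
    have b : p ^ (n+1) ≤ p ^ n := pow_le_pow_of_le_one hp.le hp1.le (by omega)
    have := h1 n
    have := h2 n
    have := h1 (n+1)
    gcongr
  have hSep : ∀ N, ∃ t, SepSeq p t ∧ ∀ w : ℂ, Polynomial.aeval w (polB p c N N) =
      (((polB p c N N).eval 0 : ℝ) : ℂ) * cP t w := by
    intro N
    obtain ⟨r, hr⟩ := polB_good hp hp1 hc hc1 N N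
    exact hr.exists_sep hp hp1
  choose t ht htw using hSep
  set d : ℕ → ℕ → ℝ := fun N i =>
    ((p ^ N - p ^ i) * (1 - c * p ^ (N + i)) / ((1 - p ^ (i + 1)) * (1 - c * p ^ i))) with hd
  have htw' : ∀ N w, cP (t N) w = ∑' n, ((∏ i ∈ Finset.range n, d N i : ℝ) : ℂ) * w ^ n := by
    intro N w
    obtain ⟨r, hr⟩ := polB_good hp hp1 hc hc1 N N
    have h0 := hr.2.1
    have hne : (((polB p c N N).eval 0 : ℝ) : ℂ) ≠ 0 := by exact_mod_cast h0.ne'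
    rw [← mul_right_inj' hne, ← htw N w, ← tsum_mul_left]
    have e : ∀ n, (((polB p c N N).eval 0 : ℝ) : ℂ) *
        (((∏ i ∈ Finset.range n, d N i : ℝ) : ℂ) * w ^ n) =
        ((polB p c N N).coeff n : ℂ) * w ^ n := by
      intro n
      rw [polB_norm hp hp1 hc hc1 N n, ← Polynomial.coeff_zero_eq_eval_zero]
      rw [← mul_assoc, ← Complex.ofReal_mul]
    simp only [e]
    rw [Polynomial.aeval_eq_sum_range, tsum_eq_sum (s := Finset.range ((polB p c N N).natDegree+1))]
    · refine Finset.sum_congr rfl fun i _ => ?_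
      simp
    · intro n hn
      rw [Polynomial.coeff_eq_zero_of_natDegree_lt]
      · simp
      · simp at hn; omega
  obtain ⟨s, hs1, hs2⟩ := sep_lim hp.le hp1 t ht (fun w => ∑' n, serT ρ w n) (by
    intro w
    simp only [htw']
    refine tendsto_tsum_of_dominated_convergence (serT_summable hp.le hp1 hρpos hs w) ?_ ?_
    · intro n
      unfold serT
      refine Tendsto.mul_const _ ((Complex.continuous_ofReal.tendsto _).comp ?_)
      refine tendsto_finsetProd _ fun i _ => ?_
      have hp0 : Tendsto (fun N => p ^ N) atTop (𝓝 0) :=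
        tendsto_pow_atTop_nhds_zero_of_lt_one hp.le hp1
      have : Tendsto (fun N => (p ^ N - p ^ i) * (1 - c * (p ^ N * p ^ i)) /
          ((1 - p ^ (i + 1)) * (1 - c * p ^ i))) atTop
          (𝓝 ((0 - p ^ i) * (1 - c * (0 * p ^ i)) / ((1 - p ^ (i + 1)) * (1 - c * p ^ i)))) :=
        (((hp0.sub_const _).mul (((hp0.mul_const _).const_mul c).const_sub 1))).div_const _
      simp only [hd, pow_add p _ i]
      convert this using 2
      rw [hρ]; ring
    · refine Eventually.of_forall fun N n => ?_
      unfold serT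
      rw [norm_mul, norm_mul, Complex.norm_real, Complex.norm_real]
      refine mul_le_mul_of_nonneg_right ?_ (norm_nonneg _)
      by_cases hn : n ≤ N
      · rw [norm_prod, norm_prod]
        refine Finset.prod_le_prod (fun _ _ => norm_nonneg _) fun i hi => ?_
        rw [Finset.mem_range] at hi
        rw [norm_neg, Real.norm_of_nonneg (hρpos i).le, hρ, hd, norm_div,
          Real.norm_of_nonneg (mul_pos (h1 i) (h2 i)).le]
        refine div_le_div_of_nonneg_right ?_ (mul_pos (h1 i) (h2 i)).le
        rw [norm_mul, Real.norm_of_nonneg (h2 _).le, Real.norm_eq_abs]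
        have a : p ^ N ≤ p ^ i := pow_le_pow_of_le_one hp.le hp1.le (by omega)
        rw [abs_of_nonpos (by linarith)]
        have b : 0 < p ^ N := by positivity
        have b' : 0 < p ^ (N+i) := by positivity
        have e := h2 (N+i)
        nlinarith [mul_pos hc b']
      · rw [Finset.prod_eq_zero (i := N) (Finset.mem_range.2 (by omega)) (by simp [hd])]
        rw [norm_zero]; exact norm_nonneg _)
  exact ⟨p, s, hp, hp1, hs1, hs2⟩

lemma qPoch_eq_rP (a q : ℝ) : qPochInf a q = rP (fun k => q ^ k) a := by
  unfold qPochInf rP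
  congr 1; ext k; ring

lemma qPoch_ne {a q : ℝ} (hq0 : 0 < q) (hq1 : q < 1) (ha : 0 < a) (ha1 : a < 1) :
    qPochInf a q ≠ 0 := by
  rw [qPoch_eq_rP]
  apply rP_ne_zero (summable_geometric_of_lt_one hq0.le hq1)
  intro k
  have : q ^ k ≤ 1 := pow_le_one₀ hq0.le hq1.le
  have : 0 < q ^ k := by positivity
  nlinarith

lemma qPoch_succ {a q : ℝ} (hq0 : 0 < q) (hq1 : q < 1) :
    qPochInf a q = (1 - a) * qPochInf (a * q) q := by
  unfold qPochInf
  rw [tprod_eq_zero_mul']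
  · simp only [pow_zero, mul_one]
    congr 2; ext k; ring
  · simp only [sub_eq_add_neg]
    apply multipliable_one_add_of_summable
    have := ((summable_nat_add_iff 1).2 (summable_geometric_of_lt_one hq0.le hq1)).norm.mul_left ‖a‖
    simpa only [norm_neg, norm_mul] using this

lemma qGamma_ne {q x : ℝ} (hq0 : 0 < q) (hq1 : q < 1) (hx : 0 < x) : qGamma q x ≠ 0 := by
  unfold qGamma
  have h1 := qPoch_ne hq0 hq1 hq0 hq1
  have h2 := qPoch_ne hq0 hq1 (Real.rpow_pos_of_pos hq0 x) (Real.rpow_lt_one hq0.le hq1 hx)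
  have h3 : (1 - q) ^ (1 - x) ≠ 0 := (Real.rpow_pos_of_pos (by linarith) _).ne'
  exact div_ne_zero (mul_ne_zero h1 h3) h2

lemma qGamma_succ {q x : ℝ} (hq0 : 0 < q) (hq1 : q < 1) (hx : 0 < x) :
    qGamma q (x + 1) * (1 - q) = qGamma q x * (1 - q ^ x) := by
  unfold qGamma
  have hx1 := Real.rpow_lt_one hq0.le hq1 hx
  have h2 := qPoch_ne hq0 hq1 (Real.rpow_pos_of_pos hq0 x) hx1
  have h4 := qPoch_ne hq0 hq1 (Real.rpow_pos_of_pos hq0 (x+1))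
    (Real.rpow_lt_one hq0.le hq1 (by linarith))
  have e := qPoch_succ (a := q ^ x) hq0 hq1
  rw [← Real.rpow_add_one hq0.ne'] at e
  have e2 : (1 - q) ^ (1 - x) = (1 - q) ^ (1 - (x + 1)) * (1 - q) := by
    rw [← Real.rpow_add_one (by linarith)]; congr 1; ring
  rw [e, e2]
  have : 1 - q ^ x ≠ 0 := by linarith
  field_simp

noncomputable def rhoQ (q γ : ℝ) (n : ℕ) : ℝ :=
  (q ^ 2) ^ n / ((1 - q ^ (γ + 1) * (q ^ 2) ^ n) * (1 - q ^ (γ + 2) * (q ^ 2) ^ n))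

lemma coef_eq {q σ γ : ℝ} (hq0 : 0 < q) (hq1 : q < 1) (hγ0 : 0 ≤ γ) (n : ℕ) :
    (-1) ^ n * σ ^ (2 * n) * q ^ (n * (n - 1)) / qGamma q (2 * n + γ + 1) =
      (qGamma q (γ + 1))⁻¹ * (∏ i ∈ Finset.range n, (-rhoQ q γ i)) * (σ ^ 2 * (1 - q) ^ 2) ^ n := by
  induction n with
  | zero => simp
  | succ n ih =>
    have hx : (0:ℝ) < 2 * n + γ + 1 := by positivity
    have e1 := qGamma_succ hq0 hq1 hx
    have e2 := qGamma_succ hq0 hq1 (show (0:ℝ) < 2 * n + γ + 1 + 1 by positivity)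
    have hr : ∀ b : ℝ, q ^ (2 * (n:ℝ) + b) = q ^ b * (q ^ 2) ^ n := by
      intro b
      rw [Real.rpow_add hq0, mul_comm, ← pow_mul, ← Real.rpow_natCast]; push_cast; rfl
    have r1 : q ^ (2 * (n:ℝ) + γ + 1) = q ^ (γ + 1) * (q ^ 2) ^ n := by rw [← hr]; congr 1; ring
    have r2 : q ^ (2 * (n:ℝ) + γ + 1 + 1) = q ^ (γ + 2) * (q ^ 2) ^ n := by
      rw [← hr]; congr 1; ring
    have l1 := Real.rpow_lt_one hq0.le hq1 hx
    have l2 := Real.rpow_lt_one hq0.le hq1 (show (0:ℝ) < 2 * n + γ + 1 + 1 by positivity)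
    have g0 := qGamma_ne hq0 hq1 hx
    have g2 := qGamma_ne hq0 hq1 (show (0:ℝ) < 2 * n + γ + 1 + 1 + 1 by positivity)
    rw [Finset.prod_range_succ, pow_succ (σ ^ 2 * (1 - q) ^ 2) n]
    have e3 : (qGamma q (γ + 1))⁻¹ * ((∏ i ∈ Finset.range n, (-rhoQ q γ i)) * -rhoQ q γ n) *
      ((σ ^ 2 * (1 - q) ^ 2) ^ n * (σ ^ 2 * (1 - q) ^ 2)) =
      ((qGamma q (γ + 1))⁻¹ * (∏ i ∈ Finset.range n, (-rhoQ q γ i)) * (σ ^ 2 * (1 - q) ^ 2) ^ n) *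
      (-rhoQ q γ n * (σ ^ 2 * (1 - q) ^ 2)) := by ring
    rw [e3, ← ih, rhoQ, ← r1, ← r2]
    have e4 : (2 * ((n + 1 : ℕ) : ℝ) + γ + 1) = 2 * n + γ + 1 + 1 + 1 := by push_cast; ring
    have e5 : q ^ ((n + 1) * (n + 1 - 1)) = q ^ (n * (n - 1)) * (q ^ 2) ^ n := by
      rw [← pow_mul, ← pow_add]; congr 1
      rcases n with _ | n
      · rfl
      · simp only [Nat.add_sub_cancel]; ring
    rw [e4, e5]
    have hA : 1 - q ^ (2 * (n:ℝ) + γ + 1) ≠ 0 := by linarith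
    have hB : 1 - q ^ (2 * (n:ℝ) + γ + 1 + 1) ≠ 0 := by linarith
    have hC : 1 - q ≠ 0 := by linarith
    have e6 : qGamma q (2 * n + γ + 1 + 1 + 1) = qGamma q (2 * n + γ + 1) *
        (1 - q ^ (2 * (n:ℝ) + γ + 1)) * (1 - q ^ (2 * (n:ℝ) + γ + 1 + 1)) / (1 - q) ^ 2 := by
      rw [eq_div_iff (by positivity)]
      linear_combination (1 - q) * e2 + (1 - q ^ (2 * (n:ℝ) + γ + 1 + 1)) * e1
    rw [e6]
    generalize q ^ (2 * (n:ℝ) + γ + 1) = A at *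
    generalize q ^ (2 * (n:ℝ) + γ + 1 + 1) = B at *
    field_simp
    ring

lemma qML_rep {q σ γ : ℝ} (hq0 : 0 < q) (hq1 : q < 1) (hγ0 : 0 ≤ γ) (z : ℂ) :
    qML γ σ q z = (((qGamma q (γ + 1))⁻¹ : ℝ) : ℂ) *
      ∑' n, serT (rhoQ q γ) (((σ ^ 2 * (1 - q) ^ 2 : ℝ) : ℂ) * z ^ 2) n := by
  unfold qML
  rw [← tsum_mul_left]
  congr 1; ext n
  rw [coef_eq hq0 hq1 hγ0, serT, Complex.ofReal_mul, Complex.ofReal_mul, Complex.ofReal_pow,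
    mul_pow, ← pow_mul]
  ring

lemma rho_sep {q γ : ℝ} (hq0 : 0 < q) (hq1 : q < 1) (hγ0 : 0 ≤ γ) :
    (∀ n, 0 < rhoQ q γ n) ∧ ∀ n, rhoQ q γ (n + 1) ≤ q ^ 2 * rhoQ q γ n := by
  have hp0 : 0 < q ^ 2 := by positivity
  have hp1 : q ^ 2 < 1 := by nlinarith
  have key : ∀ a : ℝ, 0 < a → a < 1 → (∀ n : ℕ, 0 < 1 - a * (q ^ 2) ^ n) ∧
      ∀ n : ℕ, 1 - a * (q ^ 2) ^ n ≤ 1 - a * (q ^ 2) ^ (n + 1) := by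
    intro a ha ha1
    constructor
    · intro n
      have : (q ^ 2) ^ n ≤ 1 := pow_le_one₀ hp0.le hp1.le
      nlinarith
    · intro n
      have : (q^2) ^ (n+1) ≤ (q^2) ^ n := pow_le_pow_of_le_one hp0.le hp1.le (by omega)
      nlinarith
  obtain ⟨a1, a2⟩ := key _ (Real.rpow_pos_of_pos hq0 (γ+1)) (Real.rpow_lt_one hq0.le hq1 (by linarith))
  obtain ⟨b1, b2⟩ := key _ (Real.rpow_pos_of_pos hq0 (γ+2)) (Real.rpow_lt_one hq0.le hq1 (by linarith))
  refine ⟨fun n => div_pos (by positivity) (mul_pos (a1 n) (b1 n)), fun n => ?_⟩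
  unfold rhoQ
  rw [← mul_div_assoc, ← pow_succ']
  refine div_le_div_of_nonneg_left (by positivity) (mul_pos (a1 n) (b1 n)) ?_
  exact mul_le_mul (a2 n) (b2 n) (b1 n).le (a1 (n+1)).le

lemma main_rep {q σ γ : ℝ} (hq0 : 0 < q) (hq1 : q < 1) (hσ : 0 < σ) (hγ0 : 0 ≤ γ)
    (hR : condR q γ) : ∃ (K s θ : ℝ) (t : ℕ → ℝ), K ≠ 0 ∧ 0 < s ∧ 0 < θ ∧ θ < 1 ∧ SepSeq θ t ∧
      (∀ z : ℂ, qML γ σ q z = K * cP t (s * z ^ 2)) ∧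
      (∀ x : ℝ, qMLR γ σ q x = K * rP t (s * x ^ 2)) := by
  have hp0 : 0 < q ^ 2 := by positivity
  have hp1 : q ^ 2 < 1 := by nlinarith
  obtain ⟨r1, r2⟩ := rho_sep hq0 hq1 hγ0
  have hex : ∃ θ t, 0 < θ ∧ θ < 1 ∧ SepSeq θ t ∧ ∀ w, ∑' n, serT (rhoQ q γ) w n = cP t w := by
    rcases hR with (rfl | rfl) | ⟨hγ, -, hc⟩
    · refine bessel (c := q) hp0 hp1 hq0 hq1 fun n => ?_
      unfold rhoQ
      have : q ^ ((0:ℝ) + 2) = q ^ 2 := by rw [zero_add]; exact_mod_cast Real.rpow_natCast q 2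
      rw [this, zero_add, Real.rpow_one]
      ring
    · refine bessel (c := q ^ 3) hp0 hp1 (by positivity) (pow_lt_one₀ hq0.le hq1 (by norm_num))
        fun n => ?_
      unfold rhoQ
      have e2 : q ^ ((1:ℝ) + 1) = q ^ 2 := by
        rw [show (1:ℝ) + 1 = ((2:ℕ):ℝ) by norm_num]; exact Real.rpow_natCast q 2
      have e3 : q ^ ((1:ℝ) + 2) = q ^ 3 := by
        rw [show (1:ℝ) + 2 = ((3:ℕ):ℝ) by norm_num]; exact Real.rpow_natCast q 3
      rw [e2, e3]
      ring
    · refine hutch hp0 ?_ r1 r2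
      have a0 := Real.rpow_pos_of_pos hq0 (γ+1)
      have a1 := Real.rpow_lt_one hq0.le hq1 (show 0 < γ + 1 by linarith)
      have b0 := Real.rpow_pos_of_pos hq0 (γ+2)
      have b1 := Real.rpow_lt_one hq0.le hq1 (show 0 < γ + 2 by linarith)
      have hpos : 0 < q⁻¹ * (1 - q) := mul_pos (inv_pos.2 hq0) (by linarith)
      have h1 : q⁻¹ * (1 - q) * (1 - q ^ (γ + 1)) ≤ q⁻¹ * (1 - q) :=
        mul_le_of_le_one_right hpos.le (by linarith)
      have h1' : 0 < q⁻¹ * (1 - q) * (1 - q ^ (γ + 1)) := mul_pos hpos (by linarith)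
      have h2 : q⁻¹ * (1 - q) * (1 - q ^ (γ + 1)) * (1 - q ^ (γ + 2)) ≤
          q⁻¹ * (1 - q) * (1 - q ^ (γ + 1)) := mul_le_of_le_one_right h1'.le (by linarith)
      have h3 : 1 < q⁻¹ * (1 - q) := by linarith
      rw [inv_mul_eq_div, lt_div_iff₀ hq0] at h3
      nlinarith
  obtain ⟨θ, t, h0, h1, ht, hw⟩ := hex
  have hz : ∀ z : ℂ, qML γ σ q z = (((qGamma q (γ + 1))⁻¹ : ℝ) : ℂ) *
      cP t (((σ ^ 2 * (1 - q) ^ 2 : ℝ) : ℂ) * z ^ 2) := fun z => by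
    rw [qML_rep hq0 hq1 hγ0, hw]
  refine ⟨(qGamma q (γ + 1))⁻¹, σ ^ 2 * (1 - q) ^ 2, θ, t,
    inv_ne_zero (qGamma_ne hq0 hq1 (by linarith)), ?_, h0, h1, ht, hz, fun x => ?_⟩
  · have : 0 < 1 - q := by linarith
    positivity
  · have e : ((qMLR γ σ q x : ℝ) : ℂ) = qML γ σ q x := by
      unfold qMLR qML
      rw [Complex.ofReal_tsum]
      congr 1; ext n; push_cast; ring
    have := e.trans (hz x)
    rw [← Complex.ofReal_pow, ← Complex.ofReal_mul, cP_ofReal (ht.summable h0.le h1) ht.1,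
      ← Complex.ofReal_mul] at this
    exact Complex.ofReal_injective this

lemma no_nonreal {t : ℕ → ℝ} (ht : Summable t) (h0 : ∀ k, 0 ≤ t k) {κ : ℝ} (hκ : 0 < κ)
    {W : ℂ} (hW : W.im ≠ 0 ∨ (W.im = 0 ∧ W.re < 0)) :
    (κ : ℂ) * cP t W + W * deriv (cP t) W ≠ 0 := by
  have hw : ∀ k, 1 + -((t k : ℂ) * W) ≠ 0 := by
    intro k hk
    have hre := congrArg Complex.re hk
    have him := congrArg Complex.im hk
    simp at hre him
    rcases hW with h | ⟨h, h'⟩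
    · rcases him with h1 | h1
      · rw [h1] at hre; simp at hre
      · exact h h1
    · have := mul_nonpos_of_nonneg_of_nonpos (h0 k) h'.le
      linarith
  have hne := cP_ne_zero ht h0 hw
  have hs := cP_summable ht h0 W
  rw [cP_logDeriv ht h0 hw]
  intro hz
  have hz2 : cP t W * ((κ : ℂ) - W * ∑' k, (t k : ℂ) / (1 + -((t k : ℂ) * W))) = 0 := by
    linear_combination hz
  have hz3 := (mul_eq_zero.1 hz2).resolve_left hne
  rw [← tsum_mul_left, sub_eq_zero] at hz3
  have hs2 : Summable fun k => W * ((t k : ℂ) / (1 + -((t k : ℂ) * W))) := hs.mul_left W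
  have hre := congrArg Complex.re hz3
  have him := congrArg Complex.im hz3
  rw [Complex.re_tsum hs2] at hre
  rw [Complex.im_tsum hs2] at him
  simp only [Complex.ofReal_re, Complex.ofReal_im] at hre him
  have key : ∀ k, (W * ((t k : ℂ) / (1 + -((t k : ℂ) * W)))).im
      = t k / Complex.normSq (1 + -((t k : ℂ) * W)) * W.im := by
    intro k
    rw [Complex.mul_im, Complex.div_re, Complex.div_im]
    simp
    ring
  rcases hW with h | ⟨h, h'⟩
  · simp only [key] at him
    rw [tsum_mul_right] at him
    have h1 := (mul_eq_zero.1 him.symm).resolve_right h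
    have hnn : ∀ k, 0 ≤ t k / Complex.normSq (1 + -((t k : ℂ) * W)) := fun k =>
      div_nonneg (h0 k) (Complex.normSq_nonneg _)
    have hsm : Summable fun k => t k / Complex.normSq (1 + -((t k : ℂ) * W)) := by
      have h3 := (Complex.hasSum_im hs2.hasSum).summable
      simp only [key] at h3
      exact (summable_mul_right_iff h).1 h3
    have h2 := (hasSum_zero_iff_of_nonneg hnn).1 (h1 ▸ hsm.hasSum)
    have h4 : ∀ k, t k = 0 := by
      intro k
      have := congrFun h2 k
      simp only [Pi.zero_apply] at this
      exact (div_eq_zero_iff.1 this).resolve_right (by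
        rw [Complex.normSq_eq_zero]; exact hw k)
    simp [h4] at hre
    exact hκ.ne' hre
  · have : ∀ k, (W * ((t k : ℂ) / (1 + -((t k : ℂ) * W)))).re ≤ 0 := by
      intro k
      have hWr : W = (W.re : ℂ) := by apply Complex.ext <;> simp [h]
      rw [hWr]
      have : ((W.re : ℂ) * ((t k : ℂ) / (1 + -((t k : ℂ) * (W.re : ℂ)))))
        = ((W.re * (t k / (1 + -(t k * W.re))) : ℝ) : ℂ) := by push_cast; rfl
      rw [this, Complex.ofReal_re]
      apply mul_nonpos_of_nonpos_of_nonneg h'.le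
      apply div_nonneg (h0 k)
      nlinarith [h0 k]
    have h5 : ∑' k, (W * ((t k : ℂ) / (1 + -((t k : ℂ) * W)))).re ≤ 0 := tsum_nonpos this
    linarith

lemma complex_part {t : ℕ → ℝ} (ht : Summable t) (h0 : ∀ k, 0 ≤ t k) {γ K s : ℝ}
    (hγ : 0 ≤ γ) (hK : K ≠ 0) (hs : 0 < s) {f : ℂ → ℂ}
    (hf : ∀ z, f z = K * cP t (s * z ^ 2)) {z : ℂ}
    (hz : deriv (fun w : ℂ => w ^ ((γ : ℂ) + 1) * f w) z = 0) : z.im = 0 := by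
  by_contra him
  have hz0 : z ≠ 0 := by rintro rfl; simp at him
  have hsl : z ∈ Complex.slitPlane := Or.inr him
  have d1 : HasDerivAt (fun w : ℂ => w ^ ((γ : ℂ) + 1)) (((γ : ℂ) + 1) * z ^ ((γ : ℂ) + 1 - 1) * 1) z :=
    (hasDerivAt_id z).cpow_const hsl
  have d2 : HasDerivAt (fun w : ℂ => (s : ℂ) * w ^ 2) (s * (2 * z)) z := by
    have := (hasDerivAt_pow 2 z).const_mul (s : ℂ)
    simpa using this
  have d3 : HasDerivAt (fun w : ℂ => cP t (s * w ^ 2)) (deriv (cP t) (s * z ^ 2) * (s * (2 * z))) z :=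
    HasDerivAt.comp z ((cP_diff ht h0) _).hasDerivAt d2
  have d4 := d1.mul (d3.const_mul (K : ℂ))
  have hfe : (fun w : ℂ => w ^ ((γ : ℂ) + 1) * f w) =
      (fun w : ℂ => w ^ ((γ : ℂ) + 1)) * (fun w : ℂ => (K : ℂ) * cP t (s * w ^ 2)) := by
    ext w; simp [hf]
  rw [hfe, d4.deriv] at hz
  have hp : z ^ ((γ : ℂ) + 1) = z ^ (γ : ℂ) * z := by
    rw [Complex.cpow_add _ _ hz0, Complex.cpow_one]
  have hp0 : z ^ (γ : ℂ) ≠ 0 := by simp [Complex.cpow_eq_zero_iff, hz0]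
  rw [hp, add_sub_cancel_right] at hz
  have hKc : (K : ℂ) ≠ 0 := by exact_mod_cast hK
  have hWW : (((γ + 1) / 2 : ℝ) : ℂ) * cP t (s * z ^ 2) +
      (s * z ^ 2) * deriv (cP t) (s * z ^ 2) = 0 := by
    have : (2 * K * z ^ (γ : ℂ)) * ((((γ + 1) / 2 : ℝ) : ℂ) * cP t (s * z ^ 2) +
      (s * z ^ 2) * deriv (cP t) (s * z ^ 2)) = 0 := by
      push_cast
      linear_combination hz
    exact (mul_eq_zero.1 this).resolve_left (mul_ne_zero (mul_ne_zero two_ne_zero hKc) hp0)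
  refine no_nonreal ht h0 (by positivity) ?_ hWW
  have e1 : ((s : ℂ) * z ^ 2).im = s * (2 * z.re * z.im) := by
    rw [Complex.im_ofReal_mul, pow_two, Complex.mul_im]; ring
  have e2 : ((s : ℂ) * z ^ 2).re = s * (z.re ^ 2 - z.im ^ 2) := by
    simp [pow_two]
  by_cases hre : z.re = 0
  · right
    rw [e1, e2, hre]
    refine ⟨by simp, ?_⟩
    have : 0 < z.im ^ 2 := by positivity
    nlinarith
  · left
    rw [e1]
    simp [hs.ne', hre, him]

lemma real_deriv {t : ℕ → ℝ} (ht : Summable t) (h0 : ∀ k, 0 ≤ t k) {γ K s : ℝ}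
    {f : ℝ → ℝ} (hf : ∀ z, f z = K * rP t (s * z ^ 2)) {x : ℝ} (hx : 0 < x) :
    deriv (fun x : ℝ => x ^ (γ + 1) * f x) x =
      2 * K * x ^ γ * ((γ + 1) / 2 * rP t (s * x ^ 2) + (s * x ^ 2) * deriv (rP t) (s * x ^ 2)) := by
  have d1 : HasDerivAt (fun x : ℝ => x ^ (γ + 1)) ((γ + 1) * x ^ (γ + 1 - 1)) x :=
    Real.hasDerivAt_rpow_const (Or.inl hx.ne')
  have d2 : HasDerivAt (fun w : ℝ => s * w ^ 2) (s * (2 * x)) x := by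
    have := (hasDerivAt_pow 2 x).const_mul s
    simpa using this
  have d3 : HasDerivAt (fun w : ℝ => rP t (s * w ^ 2)) (deriv (rP t) (s * x ^ 2) * (s * (2 * x))) x :=
    HasDerivAt.comp x (rP_hasDerivAt ht h0 _).differentiableAt.hasDerivAt d2
  have d4 := d1.mul (d3.const_mul K)
  have hfe : (fun w : ℝ => w ^ (γ + 1) * f w) =
      (fun w : ℝ => w ^ (γ + 1)) * (fun w : ℝ => K * rP t (s * w ^ 2)) := by
    ext w; simp [hf]
  rw [hfe, d4.deriv, Real.rpow_add_one hx.ne', add_sub_cancel_right]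
  ring

lemma sep_inj {θ : ℝ} (hθ1 : θ < 1) (hθ0 : 0 < θ) {t : ℕ → ℝ} (h : SepSeq θ t) {j k : ℕ} (hjk : j < k)
    (hj : 0 < t j) : t k < t j := by
  induction k, hjk using Nat.le_induction with
  | base => have := h.2 j; nlinarith
  | succ n hn ih => have := h.2 n; have := h.1 n; nlinarith

lemma no_common {θ : ℝ} (hθ0 : 0 < θ) (hθ1 : θ < 1) {t : ℕ → ℝ} (h : SepSeq θ t) {γ K s : ℝ}
    (hK : K ≠ 0) (hs : 0 < s)
    {f : ℝ → ℝ} (hf : ∀ z, f z = K * rP t (s * z ^ 2)) {x : ℝ} (hx : 0 < x) (hfx : f x = 0) :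
    deriv (fun x : ℝ => x ^ (γ + 1) * f x) x ≠ 0 := by
  have ht := SepSeq.summable hθ0.le hθ1 h
  have h0 := h.1
  rw [real_deriv ht h0 hf hx]
  rw [hf] at hfx
  have hr : rP t (s * x ^ 2) = 0 := (mul_eq_zero.1 hfx).resolve_left hK
  have hW : 0 < s * x ^ 2 := by positivity
  obtain ⟨k, hk⟩ : ∃ k, t k * (s * x ^ 2) = 1 := by
    by_contra! hne
    exact rP_ne_zero ht hne hr
  have hd : deriv (rP t) (s * x ^ 2) ≠ 0 := by
    apply rP_simple ht h0 hk
    intro j hj he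
    have hkp : 0 < t k := by
      by_contra! hc; nlinarith [h0 k]
    have hjp : 0 < t j := by
      by_contra! hc; nlinarith [h0 j]
    have heq : t j = t k := mul_right_cancel₀ hW.ne' (he.trans hk.symm)
    rcases lt_or_gt_of_ne hj with h1 | h1
    · have := sep_inj hθ1 hθ0 h h1 hjp; linarith
    · have := sep_inj hθ1 hθ0 h h1 hkp; linarith
  rw [hr, mul_zero, zero_add]
  have := Real.rpow_pos_of_pos hx γ
  positivity

lemma uniq {t : ℕ → ℝ} (ht : Summable t) (h0 : ∀ k, 0 ≤ t k) {γ K s : ℝ} (hγ : 0 ≤ γ)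
    (hK : K ≠ 0) (hs : 0 < s)
    {f : ℝ → ℝ} (hf : ∀ z, f z = K * rP t (s * z ^ 2)) {x y : ℝ} (hx : 0 < x) (hxy : x < y)
    (hdx : deriv (fun x : ℝ => x ^ (γ + 1) * f x) x = 0)
    (hdy : deriv (fun x : ℝ => x ^ (γ + 1) * f x) y = 0) :
    ∃ z, x ≤ z ∧ z ≤ y ∧ f z = 0 := by
  by_contra! hne
  have hy := hx.trans hxy
  have main : ∀ w, x ≤ w → w ≤ y → ∀ k, t k * (s * w ^ 2) ≠ 1 := by
    intro w h1 h2 k hk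
    apply hne w h1 h2
    rw [hf, rP_eq_zero hk, mul_zero]
  have val : ∀ w, x ≤ w → w ≤ y → deriv (fun x : ℝ => x ^ (γ + 1) * f x) w = 0 →
      (γ + 1) / 2 = ∑' k, (s * w ^ 2) * (t k / (1 + -(t k * (s * w ^ 2)))) := by
    intro w h1 h2 hd
    have hw0 : 0 < w := by linarith
    rw [real_deriv ht h0 hf hw0, rP_logDeriv ht h0 (main w h1 h2)] at hd
    have hp := Real.rpow_pos_of_pos hw0 γ
    have hr := rP_ne_zero ht (main w h1 h2)
    rw [tsum_mul_left]
    have : (2 * K * w ^ γ * rP t (s * w ^ 2)) * ((γ + 1) / 2 -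
      (s * w ^ 2) * ∑' k, (t k / (1 + -(t k * (s * w ^ 2))))) = 0 := by
      linear_combination hd
    have := (mul_eq_zero.1 this).resolve_left (by positivity)
    linarith
  have vx := val x le_rfl hxy.le hdx
  have vy := val y hxy.le le_rfl hdy
  have hWlt : s * x ^ 2 < s * y ^ 2 := by gcongr
  set W1 := s * x ^ 2 with hW1
  set W2 := s * y ^ 2 with hW2
  have hW1p : 0 < W1 := by positivity
  obtain ⟨k, hk⟩ : ∃ k, t k ≠ 0 := by
    by_contra! hc
    simp [hc] at vx
    linarith
  have sgn : ∀ k, 0 < (1 + -(t k * W1)) * (1 + -(t k * W2)) := by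
    intro k
    by_contra! hc
    have hcont : ContinuousOn (fun w => t k * (s * w ^ 2)) (Set.Icc x y) := by fun_prop
    have a1 : t k * W1 ≤ t k * W2 := mul_le_mul_of_nonneg_left hWlt.le (h0 k)
    have b1 : t k * W1 ≤ 1 := by
      by_contra! hh; nlinarith
    have b2 : 1 ≤ t k * W2 := by
      by_contra! hh; nlinarith
    obtain ⟨w, hw, hw1⟩ := intermediate_value_Icc hxy.le hcont ⟨b1, b2⟩
    exact main w hw.1 hw.2 k hw1
  have dif : ∀ k, W2 * (t k / (1 + -(t k * W2))) - W1 * (t k / (1 + -(t k * W1))) =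
      t k * (W2 - W1) / ((1 + -(t k * W1)) * (1 + -(t k * W2))) := by
    intro k
    have hs := sgn k
    have h1 : (1 + -(t k * W1)) ≠ 0 := by intro h; simp [h] at hs
    have h2 : (1 + -(t k * W2)) ≠ 0 := by intro h; simp [h] at hs
    rw [← mul_div_assoc, ← mul_div_assoc, div_sub_div _ _ h2 h1,
      div_eq_div_iff (mul_ne_zero h2 h1) (mul_ne_zero h1 h2)]
    ring
  have hlt : ∑' k, W1 * (t k / (1 + -(t k * W1))) < ∑' k, W2 * (t k / (1 + -(t k * W2))) := by
    refine Summable.tsum_lt_tsum (i := k) ?_ ?_ ((rP_summable ht h0 W1).mul_left W1)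
      ((rP_summable ht h0 W2).mul_left W2)
    · intro j
      have : 0 ≤ t j * (W2 - W1) / ((1 + -(t j * W1)) * (1 + -(t j * W2))) :=
        div_nonneg (mul_nonneg (h0 j) (by linarith)) (sgn j).le
      rw [← dif] at this
      linarith
    · have : 0 < t k * (W2 - W1) / ((1 + -(t k * W1)) * (1 + -(t k * W2))) :=
        div_pos (mul_pos (lt_of_le_of_ne (h0 k) (Ne.symm hk)) (by linarith)) (sgn k)
      rw [← dif] at this
      linarith
  linarith

lemma rolle_part {t : ℕ → ℝ} (ht : Summable t) (h0 : ∀ k, 0 ≤ t k) {γ K s : ℝ} (hγ : 0 ≤ γ)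
    {f : ℝ → ℝ} (hf : ∀ z, f z = K * rP t (s * z ^ 2)) {x y : ℝ} (hx : x = 0 ∨ f x = 0)
    (hxy : x < y) (hy : f y = 0) :
    ∃ c, x < c ∧ c < y ∧ deriv (fun x : ℝ => x ^ (γ + 1) * f x) c = 0 := by
  have hc : Continuous (fun x : ℝ => x ^ (γ + 1) * f x) := by
    have h1 : Continuous (rP t) := continuous_iff_continuousAt.2 fun x =>
      (rP_hasDerivAt ht h0 x).continuousAt
    have h2 : f = fun z => K * rP t (s * z ^ 2) := funext hf
    rw [h2]
    have h3 : Continuous fun x : ℝ => x ^ (γ + 1) :=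
      Real.continuous_rpow_const (by linarith)
    have h4 : Continuous fun z : ℝ => rP t (s * z ^ 2) := h1.comp (by fun_prop)
    exact h3.mul (continuous_const.mul h4)
  have e : x ^ (γ + 1) * f x = y ^ (γ + 1) * f y := by
    rw [hy, mul_zero]
    rcases hx with rfl | h
    · rw [Real.zero_rpow (by linarith), zero_mul]
    · rw [h, mul_zero]
  obtain ⟨c, hcm, hd⟩ := exists_deriv_eq_zero hxy hc.continuousOn e
  exact ⟨c, hcm.1, hcm.2, hd⟩

lemma interlace_comb {ε ξ : ℕ → ℝ} {Z D : ℝ → Prop} (hεmono : StrictMono ε) (hεpos : ∀ n, 0 < ε n)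
    (hεall : ∀ x : ℝ, 0 < x → Z x → ∃ n, x = ε n)
    (hεzero : ∀ n, Z (ε n))
    (hξmono : StrictMono ξ) (hξpos : ∀ n, 0 < ξ n) (hξzero : ∀ n, D (ξ n))
    (hξall : ∀ x : ℝ, 0 < x → D x → ∃ n, x = ξ n)
    (hr : ∀ x y, (x = 0 ∨ Z x) → x < y → Z y → ∃ c, x < c ∧ c < y ∧ D c)
    (hu : ∀ x y, 0 < x → x < y → D x → D y → ∃ z, x ≤ z ∧ z ≤ y ∧ Z z)
    (hn : ∀ x, 0 < x → Z x → ¬ D x) (n : ℕ) : ξ n < ε n ∧ ε n < ξ (n + 1) := by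
  have step : ∀ n, ξ n < ε n → (∀ m < n, ε m < ξ n) → ε n < ξ (n + 1) := by
    intro n h1 h2
    obtain ⟨z, hz1, hz2, hz⟩ := hu _ _ (hξpos n) (hξmono (Nat.lt_succ_self n)) (hξzero n) (hξzero (n + 1))
    have hzp : 0 < z := lt_of_lt_of_le (hξpos n) hz1
    obtain ⟨m, rfl⟩ := hεall z hzp hz
    have hlt : ε m < ξ (n + 1) := lt_of_le_of_ne hz2 fun h => hn _ hzp hz (h ▸ hξzero (n + 1))
    have hm : n ≤ m := by
      by_contra! hc
      exact absurd (h2 m hc) (not_lt.2 hz1)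
    exact lt_of_le_of_lt (hεmono.monotone hm) hlt
  have main : ∀ n, ξ n < ε n ∧ (∀ m < n, ε m < ξ n) := by
    intro n
    induction n with
    | zero =>
      refine ⟨?_, fun m hm => absurd hm (Nat.not_lt_zero m)⟩
      obtain ⟨c, hc0, hc1, hc⟩ := hr 0 (ε 0) (Or.inl rfl) (hεpos 0) (hεzero 0)
      obtain ⟨m, rfl⟩ := hξall c hc0 hc
      exact lt_of_le_of_lt (hξmono.monotone (Nat.zero_le m)) hc1
    | succ n ih =>
      have h1 := step n ih.1 ih.2
      refine ⟨?_, fun m hm => lt_of_le_of_lt (hεmono.monotone (Nat.lt_succ_iff.1 hm)) h1⟩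
      obtain ⟨c, hc0, hc1, hc⟩ := hr (ε n) (ε (n + 1)) (Or.inr (hεzero n))
        (hεmono (Nat.lt_succ_self n)) (hεzero (n + 1))
      obtain ⟨m, rfl⟩ := hξall c ((hεpos n).trans hc0) hc
      have hm : n < m := hξmono.lt_iff_lt.1 (ih.1.trans hc0)
      exact lt_of_le_of_lt (hξmono.monotone hm) hc1
  exact ⟨(main n).1, step n (main n).1 (main n).2⟩


end Helpers

theorem stmt4 (q σ γ : ℝ) (hq0 : 0 < q) (hq1 : q < 1) (hσ : 0 < σ)
    (hγ0 : 0 ≤ γ) (hγ2 : γ < 2) (hR : condR q γ)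
    (ε : ℕ → ℝ) (hεmono : StrictMono ε) (hεpos : ∀ n, 0 < ε n)
    (hεzero : ∀ n, qMLR γ σ q (ε n) = 0)
    (hεall : ∀ x : ℝ, 0 < x → qMLR γ σ q x = 0 → ∃ n, x = ε n)
    (ξ : ℕ → ℝ) (hξmono : StrictMono ξ) (hξpos : ∀ n, 0 < ξ n)
    (hξzero : ∀ n, deriv (fun x : ℝ => x ^ (γ + 1) * qMLR γ σ q x) (ξ n) = 0)
    (hξall : ∀ x : ℝ, 0 < x →
      deriv (fun x : ℝ => x ^ (γ + 1) * qMLR γ σ q x) x = 0 → ∃ n, x = ξ n) :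
    (∀ z : ℂ, deriv (fun w : ℂ => w ^ ((γ : ℂ) + 1) * qML γ σ q w) z = 0 → z.im = 0) ∧
    ∀ n : ℕ, ξ n < ε n ∧ ε n < ξ (n + 1) := by
  obtain ⟨K, s, θ, t, hK, hs, hθ0, hθ1, hsep, hc, hr⟩ := main_rep hq0 hq1 hσ hγ0 hR
  have ht := SepSeq.summable hθ0.le hθ1 hsep
  have h0 := hsep.1
  refine ⟨fun z hz => complex_part ht h0 hγ0 hK hs hc hz, fun n => ?_⟩
  exact interlace_comb (Z := fun x => qMLR γ σ q x = 0)
    (D := fun x => deriv (fun x : ℝ => x ^ (γ + 1) * qMLR γ σ q x) x = 0)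
    hεmono hεpos hεall hεzero hξmono hξpos hξzero hξall
    (fun x y hx hxy hy => rolle_part ht h0 hγ0 hr hx hxy hy)
    (fun x y hx hxy hdx hdy => uniq ht h0 hγ0 hK hs hr hx hxy hdx hdy)
    (fun x hx hz => no_common hθ0 hθ1 hsep hK hs hr hx hz) n
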